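/- Let p be a prime number. (1) If p = 2, then Γ(ℤ_{p²}) has only one vertex and is not partitionable into global defensive alliances. (2) If p ≠ 2, then Γ(ℤ_{p²}) is partitionable into global defensive alliances and ψ_g(Γ(ℤ_{p²})) = 2. -/

import Mathlib

open Classical

/-- The set of zero-divisors of `R` (including `0`). -/
def zeroDivisorSet (R : Type*) [CommRing R] : Set R :=
  {x : R | ∃ y : R, y ≠ 0 ∧ x * y = 0}

/-- Vertices of the zero-divisor graph: the nonzero zero-divisors of `R`. -/
abbrev ZDV (R : Type*) [CommRing R] : Type _ :=
  {x : R // x ≠ 0 ∧ ∃ y : R, y ≠ 0 ∧ x * y = 0}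

/-- The zero-divisor graph `Γ(R)` of a commutative ring `R`: vertices are the nonzero
zero-divisors, and distinct vertices `x`, `y` are adjacent iff `x * y = 0`. -/
def zdGraph (R : Type*) [CommRing R] : SimpleGraph (ZDV R) where
  Adj a b := a ≠ b ∧ (a : R) * (b : R) = 0
  symm := by
    constructor
    intro a b h
    exact ⟨h.1.symm, by rw [mul_comm]; exact h.2⟩
  loopless := by
    constructor
    intro a h
    exact h.1 rfl

/-- `degIn G S v` is the number of neighbors of `v` lying in `S`. -/
noncomputable def degIn {V : Type*} (G : SimpleGraph V) (S : Set V) (v : V) : ℕ :=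
  Set.ncard {u : V | u ∈ S ∧ G.Adj v u}

/-- `S` is a dominating set: every vertex outside `S` has a neighbor in `S`. -/
def IsDominatingSet {V : Type*} (G : SimpleGraph V) (S : Set V) : Prop :=
  ∀ v ∉ S, ∃ u ∈ S, G.Adj v u

/-- `S` is a defensive alliance: `S` is nonempty and every `v ∈ S` satisfies
`deg_S(v) + 1 ≥ deg_{Sᶜ}(v)`. -/
def IsDefensiveAlliance {V : Type*} (G : SimpleGraph V) (S : Set V) : Prop :=
  S.Nonempty ∧ ∀ v ∈ S, degIn G Sᶜ v ≤ degIn G S v + 1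

/-- A global defensive alliance is a defensive alliance that is also a dominating set. -/
def IsGlobalDefensiveAlliance {V : Type*} (G : SimpleGraph V) (S : Set V) : Prop :=
  IsDefensiveAlliance G S ∧ IsDominatingSet G S

/-- `P` is a partition of the vertex set of `G` into global defensive alliances. -/
def IsGDAPartition {V : Type*} (G : SimpleGraph V) (P : Finset (Set V)) : Prop :=
  (∀ S ∈ P, IsGlobalDefensiveAlliance G S) ∧
  (⋃₀ (P : Set (Set V)) = Set.univ) ∧
  ((P : Set (Set V)).Pairwise Disjoint)

/-- The global defensive alliance partition number `ψ_g(G)`: the maximum number of parts in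
a partition of the vertex set into global defensive alliances. -/
noncomputable def psiG {V : Type*} (G : SimpleGraph V) : ℕ :=
  sSup {n : ℕ | ∃ P : Finset (Set V), IsGDAPartition G P ∧ P.card = n}

/-- `G` is partitionable into global defensive alliances iff `ψ_g(G) ≥ 2`. -/
def PartitionableGDA {V : Type*} (G : SimpleGraph V) : Prop :=
  2 ≤ psiG G

/-- The global defensive alliance number `γ_a(G)`: the minimum cardinality of a global
defensive alliance. -/
noncomputable def gammaA {V : Type*} (G : SimpleGraph V) : ℕ :=
  sInf {n : ℕ | ∃ S : Set V, IsGlobalDefensiveAlliance G S ∧ S.ncard = n}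


theorem degIn_of_complete {V : Type*} [Finite V] (G : SimpleGraph V)
    (hG : ∀ a b, a ≠ b → G.Adj a b) (S : Set V) (v : V) :
    degIn G S v = (S \ {v}).ncard := by
  unfold degIn
  congr 1
  ext u
  simp only [Set.mem_setOf_eq, Set.mem_diff, Set.mem_singleton_iff]
  constructor
  · rintro ⟨h, h'⟩
    exact ⟨h, fun e => G.loopless.irrefl v (e ▸ h')⟩
  · rintro ⟨h, h'⟩
    exact ⟨h, hG _ _ (Ne.symm h')⟩

theorem gda_complete {V : Type*} [Finite V] (G : SimpleGraph V)
    (hG : ∀ a b, a ≠ b → G.Adj a b) (S : Set V) :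
    IsGlobalDefensiveAlliance G S ↔ S.Nonempty ∧ Nat.card V ≤ 2 * S.ncard := by
  have key : ∀ v ∈ S, (degIn G Sᶜ v ≤ degIn G S v + 1 ↔ Nat.card V ≤ 2 * S.ncard) := by
    intro v hv
    rw [degIn_of_complete G hG, degIn_of_complete G hG]
    have h1 : Sᶜ \ {v} = Sᶜ := by
      apply Set.diff_singleton_eq_self
      simpa using hv
    have h2 := Set.ncard_diff_singleton_add_one hv (Set.toFinite S)
    have h3 := Set.ncard_add_ncard_compl S
    rw [h1]
    omega
  constructor
  · rintro ⟨⟨⟨v, hv⟩, h⟩, -⟩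
    exact ⟨⟨v, hv⟩, (key v hv).1 (h v hv)⟩
  · rintro ⟨⟨w, hw⟩, h⟩
    refine ⟨⟨⟨w, hw⟩, fun v hv => (key v hv).2 h⟩, fun v hv => ⟨w, hw, hG _ _ ?_⟩⟩
    rintro rfl
    exact hv hw

theorem card_le_of_complete {V : Type*} [Finite V] [Nonempty V] (G : SimpleGraph V)
    (hG : ∀ a b, a ≠ b → G.Adj a b) (P : Finset (Set V)) (hP : IsGDAPartition G P) :
    P.card ≤ 2 := by
  obtain ⟨h1, h2, h3⟩ := hP
  by_contra! hc
  obtain ⟨A, B, C, hA, hB, hC, hAB, hAC, hBC⟩ := Finset.two_lt_card_iff.1 hc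
  have dAB := h3 hA hB hAB
  have dAC := h3 hA hC hAC
  have dBC := h3 hB hC hBC
  have gA := (gda_complete G hG A).1 (h1 A hA)
  have gB := (gda_complete G hG B).1 (h1 B hB)
  have gC := (gda_complete G hG C).1 (h1 C hC)
  have e1 := Set.ncard_union_eq dAB (Set.toFinite _) (Set.toFinite _)
  have e2 := Set.ncard_union_eq (Set.disjoint_union_left.2 ⟨dAC, dBC⟩)
    (Set.toFinite _) (Set.toFinite _)
  have e3 := Set.ncard_le_card ((A ∪ B) ∪ C)
  have : 0 < Nat.card V := Nat.card_pos
  omega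

theorem psi_complete_even {V : Type*} [Finite V] [Nonempty V] (G : SimpleGraph V)
    (hG : ∀ a b, a ≠ b → G.Adj a b) (he : Even (Nat.card V)) : psiG G = 2 := by
  apply le_antisymm
  · apply csSup_le'
    rintro n ⟨P, hP, rfl⟩
    exact card_le_of_complete G hG P hP
  · apply le_csSup
    · refine ⟨2, ?_⟩
      rintro n ⟨P, hP, rfl⟩
      exact card_le_of_complete G hG P hP
    · obtain ⟨m, hm⟩ := he
      have hpos : 0 < Nat.card V := Nat.card_pos
      obtain ⟨S, -, hS⟩ := Set.exists_subset_card_eq (s := (Set.univ : Set V)) (n := m)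
        (by rw [Set.ncard_univ]; omega)
      have hadd := Set.ncard_add_ncard_compl S
      have hSn : S.Nonempty := Set.nonempty_of_ncard_ne_zero (by omega)
      have hSc : (Sᶜ).Nonempty := Set.nonempty_of_ncard_ne_zero (by omega)
      have hne : S ≠ Sᶜ := by
        intro h
        obtain ⟨v, hv⟩ := hSn
        have hv' := hv
        rw [h] at hv'
        exact hv' hv
      refine ⟨{S, Sᶜ}, ⟨?_, ?_, ?_⟩, Finset.card_pair hne⟩
      · intro T hT
        rw [gda_complete G hG]
        simp only [Finset.mem_insert, Finset.mem_singleton] at hT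
        rcases hT with rfl | rfl
        · exact ⟨hSn, by omega⟩
        · exact ⟨hSc, by omega⟩
      · simp
      · rw [Finset.coe_pair, Set.pairwise_pair]
        exact fun _ => ⟨disjoint_compl_right, disjoint_compl_left⟩

theorem psi_one {V : Type*} [Subsingleton V] (G : SimpleGraph V) : psiG G ≤ 1 := by
  apply csSup_le'
  rintro n ⟨P, hP, rfl⟩
  rw [Finset.card_le_one]
  have h : ∀ S ∈ P, S = Set.univ := by
    intro S hS
    obtain ⟨v, hv⟩ := (hP.1 S hS).1.1
    ext w
    simp [Subsingleton.elim w v, hv]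
  intro a ha b hb
  rw [h a ha, h b hb]

theorem zdv_dvd (p : ℕ) (hp : p.Prime) (x : ZDV (ZMod (p ^ 2))) :
    ∃ k : ℕ, 0 < k ∧ k < p ∧ (x : ZMod (p ^ 2)) = ((p * k : ℕ) : ZMod (p ^ 2)) := by
  haveI : NeZero (p ^ 2) := ⟨pow_ne_zero _ hp.ne_zero⟩
  obtain ⟨x, hx, y, hy, hxy⟩ := x
  have hlt := ZMod.val_lt x
  have hx' : x = ((x.val : ℕ) : ZMod (p ^ 2)) := (ZMod.natCast_zmod_val x).symm
  have hy' : y = ((y.val : ℕ) : ZMod (p ^ 2)) := (ZMod.natCast_zmod_val y).symm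
  have hd : p ^ 2 ∣ x.val * y.val := by
    rw [← ZMod.natCast_eq_zero_iff]
    push_cast
    rw [← hx', ← hy', hxy]
  have hpx : p ∣ x.val := by
    by_contra hn
    have hc : Nat.Coprime (p ^ 2) x.val :=
      Nat.Coprime.pow_left 2 ((Nat.Prime.coprime_iff_not_dvd hp).2 hn)
    have := hc.dvd_of_dvd_mul_left hd
    apply hy
    rw [hy', ZMod.natCast_eq_zero_iff]
    exact this
  obtain ⟨k, hk⟩ := hpx
  refine ⟨k, ?_, ?_, ?_⟩
  · rcases Nat.eq_zero_or_pos k with h | h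
    · exfalso
      apply hx
      rw [hx', hk, h]
      simp
    · exact h
  · rw [hk, pow_two] at hlt
    exact lt_of_mul_lt_mul_left hlt (Nat.zero_le _)
  · change x = _
    rw [← hk]
    exact hx'

theorem pk_ne_zero (p : ℕ) (hp : p.Prime) (k : ℕ) (h0 : 0 < k) (hk : k < p) :
    ((p * k : ℕ) : ZMod (p ^ 2)) ≠ 0 := by
  intro h
  rw [ZMod.natCast_eq_zero_iff, pow_two] at h
  have := Nat.le_of_dvd h0 (Nat.dvd_of_mul_dvd_mul_left hp.pos h)
  omega

theorem pk_mul (p k l : ℕ) :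
    ((p * k : ℕ) : ZMod (p ^ 2)) * ((p * l : ℕ) : ZMod (p ^ 2)) = 0 := by
  rw [← Nat.cast_mul, ZMod.natCast_eq_zero_iff]
  exact ⟨k * l, by ring⟩

theorem zdv_complete (p : ℕ) (hp : p.Prime) (a b : ZDV (ZMod (p ^ 2))) (h : a ≠ b) :
    (zdGraph (ZMod (p ^ 2))).Adj a b := by
  refine ⟨h, ?_⟩
  obtain ⟨k, -, -, hk⟩ := zdv_dvd p hp a
  obtain ⟨l, -, -, hl⟩ := zdv_dvd p hp b
  rw [hk, hl]
  exact pk_mul p k l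

theorem zdv_card (p : ℕ) (hp : p.Prime) : Nat.card (ZDV (ZMod (p ^ 2))) = p - 1 := by
  let f : Fin (p - 1) → ZDV (ZMod (p ^ 2)) := fun i =>
    ⟨((p * (i.val + 1) : ℕ) : ZMod (p ^ 2)),
      pk_ne_zero p hp _ (Nat.succ_pos _) (by have := i.isLt; omega),
      ((p * (i.val + 1) : ℕ) : ZMod (p ^ 2)),
      pk_ne_zero p hp _ (Nat.succ_pos _) (by have := i.isLt; omega), pk_mul p _ _⟩
  have hf : Function.Bijective f := by
    constructor
    · intro i j hij
      have h : ((p * (i.val + 1) : ℕ) : ZMod (p ^ 2)) = ((p * (j.val + 1) : ℕ) : ZMod (p ^ 2)) :=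
        congrArg Subtype.val hij
      have hlt : ∀ i : Fin (p - 1), p * (i.val + 1) < p ^ 2 := by
        intro i
        rw [pow_two]
        exact Nat.mul_lt_mul_of_pos_left (by have := i.isLt; omega) hp.pos
      rw [ZMod.natCast_eq_natCast_iff] at h
      have h' := Nat.ModEq.eq_of_lt_of_lt h (hlt i) (hlt j)
      have := Nat.eq_of_mul_eq_mul_left hp.pos h'
      ext
      omega
    · intro x
      obtain ⟨k, h0, hk, hx⟩ := zdv_dvd p hp x
      refine ⟨⟨k - 1, by omega⟩, ?_⟩
      apply Subtype.ext
      rw [hx]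
      change ((p * (k - 1 + 1) : ℕ) : ZMod (p ^ 2)) = _
      rw [Nat.sub_add_cancel h0]
  rw [← Nat.card_eq_of_bijective f hf, Nat.card_fin]

/-- For a prime `p`: if `p = 2` then `Γ(ℤ_{p²})` has only one vertex and is
not partitionable into global defensive alliances; if `p ≠ 2` then `Γ(ℤ_{p²})` is
partitionable and `ψ_g(Γ(ℤ_{p²})) = 2`. -/
theorem stmt2 (p : ℕ) (hp : p.Prime) :
    (p = 2 → Nat.card (ZDV (ZMod (p ^ 2))) = 1 ∧
      ¬ PartitionableGDA (zdGraph (ZMod (p ^ 2)))) ∧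
    (p ≠ 2 → PartitionableGDA (zdGraph (ZMod (p ^ 2))) ∧
      psiG (zdGraph (ZMod (p ^ 2))) = 2) := by
  have hcard := zdv_card p hp
  have h2 := hp.two_le
  have hpos : 0 < Nat.card (ZDV (ZMod (p ^ 2))) := by omega
  obtain ⟨hne, hfin⟩ := Nat.card_pos_iff.1 hpos
  constructor
  · intro h
    have h1 : Nat.card (ZDV (ZMod (p ^ 2))) = 1 := by omega
    refine ⟨h1, ?_⟩
    have hs : Subsingleton (ZDV (ZMod (p ^ 2))) := (Nat.card_eq_one_iff_unique.1 h1).1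
    have := psi_one (zdGraph (ZMod (p ^ 2)))
    unfold PartitionableGDA
    omega
  · intro h
    have he : Even (Nat.card (ZDV (ZMod (p ^ 2)))) := by
      rw [hcard]
      exact hp.even_sub_one h
    have := psi_complete_even (zdGraph (ZMod (p ^ 2))) (zdv_complete p hp) he
    exact ⟨this.ge, this⟩
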